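/- Let S₁, ..., Sₙ all be copies of the same group S, where S is a non-trivial free product of two non-trivial groups, and let ψ : S₁ × ... × Sₙ → S₁ × ... × Sₙ be an isomorphism. Then there is a permutation σ of {1,...,n} such that for each j the component map π_j ∘ ψ|_{S_{σ(j)}} : S_{σ(j)} → S_j is an isomorphism, and π_j ∘ ψ|_{S_i} is trivial for all i ≠ σ(j). -/

import Mathlib

open Monoid

/-!
Call a nontrivial group centrally indecomposable if two subgroups that commute elementwise and
generate the group cannot both be nontrivial.

A free product `C ∗ D` of nontrivial groups has this property: by normal forms, the centralizer of
any nontrivial element of `C` lies in `C`. If `A` and `B` commute and generate, write some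
`1 ≠ c ∈ C` as `c = a b`. Both factors commute with `c`, so they lie in `C`, and one of them is
nontrivial, say `a`. Then `B ≤ C` because `B` centralizes `a`, and if `B` had a nontrivial element
then also `A ≤ C`, so that `C` would be the whole free product.

Given an isomorphism of direct products of such groups, a coordinate of the image is a surjection
from the source product; the images of one factor and of the product of the other factors commute
and generate, so one of them is trivial. Hence a coordinate of the image that is nontrivial on a
factor depends on that factor only. Applying this to the isomorphism and to its inverse matches
the factors on both sides, whatever the index sets.
-/

section CoprodI

open CoprodI

variable {ι : Type*} {M : ι → Type*}

theorem fstIdx_of_smul [DecidableEq ι] [∀ i, Monoid (M i)] [∀ i, DecidableEq (M i)] {i : ι}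
    {m : M i} (hm : m ≠ 1) {w : Word M} (hw : w.fstIdx ≠ some i) : (of m • w).fstIdx = some i := by
  rw [← Word.cons_eq_smul (h1 := hw) (h2 := hm), Word.fstIdx_cons]

theorem fstIdx_prod_smul_of_smul_empty_eq_some_iff [DecidableEq ι] [∀ i, Monoid (M i)]
    [∀ i, DecidableEq (M i)] {i k : ι} {c : M i} (hc : c ≠ 1) (hk : k ≠ i) (w : Word M) :
    (w.prod • of c • (Word.empty : Word M)).fstIdx = some k ↔ w.fstIdx = some k := by
  have fstIdx_of_smul_empty {m : M i} (hm : m ≠ 1) :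
      (of m • (Word.empty : Word M)).fstIdx = some i := fstIdx_of_smul hm nofun
  induction w using Word.consRecOn generalizing k with
  | empty =>
    rw [Word.prod_empty, one_smul, fstIdx_of_smul_empty hc]
    simp [hk.symm, Word.fstIdx]
  | cons j m w hw hm ih =>
    rw [Word.prod_cons, mul_smul, Word.fstIdx_cons]
    obtain rfl | hj := eq_or_ne j i
    · -- The appended letter `c` can only be absorbed by `m` when nothing stands between them.
      suffices (of m • w.prod • of c • (Word.empty : Word M)).fstIdx ≠ some k by
        simpa [hk.symm] using this
      cases w using Word.consRecOn with
      | empty =>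
        rw [Word.prod_empty, one_smul, ← mul_smul, ← map_mul]
        obtain hmc | hmc := eq_or_ne (m * c) 1
        · simp [hmc, Word.fstIdx]
        · rw [fstIdx_of_smul_empty hmc]
          simpa using hk.symm
      | cons l a v hv ha =>
        have hl : l ≠ j := by simpa using hw
        have fstIdx_tail := (ih hl).2 (Word.fstIdx_cons a v hv ha)
        rw [fstIdx_of_smul hm (by rw [fstIdx_tail]; simpa using hl)]
        simpa using hk.symm
    · rw [fstIdx_of_smul hm (mt (ih hj).1 hw)]

theorem centralizer_of_le_range_of [∀ i, Group (M i)] {i : ι} {c : M i} (hc : c ≠ 1) :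
    Subgroup.centralizer {(of c : CoprodI M)} ≤ (of : M i →* CoprodI M).range := by
  classical
  intro g hg
  obtain ⟨x, w, hw, rfl⟩ : ∃ (x : M i) (w : Word M), w.fstIdx ≠ some i ∧ g = of x * w.prod := by
    let p := Word.equivPair i (Word.equiv g)
    refine ⟨p.head, p.tail, p.fstIdx_ne, ?_⟩
    rw [← Word.prod_rcons, ← Word.equivPair_symm, Equiv.symm_apply_apply]
    exact (Word.equiv.symm_apply_apply g).symm
  cases w using Word.consRecOn with
  | empty => exact ⟨x, by simp⟩
  | cons k m v hv hm =>
    exfalso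
    set w := Word.cons m v hv hm
    have conj_mul : of (x⁻¹ * c * x) * w.prod = w.prod * of c := by
      rw [Subgroup.mem_centralizer_singleton_iff] at hg
      simp only [map_mul, map_inv, mul_assoc] at hg ⊢
      rw [← hg, inv_mul_cancel_left]
    have conj_ne_one : x⁻¹ * c * x ≠ 1 := by
      simpa using (conj_eq_one_iff (a := x⁻¹) (b := c)).not.2 hc
    have fstIdx_left : ((of (x⁻¹ * c * x) * w.prod) • (Word.empty : Word M)).fstIdx = some i := by
      have prod_smul_empty : w.prod • (Word.empty : Word M) = w :=
        Word.equiv.apply_symm_apply w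
      rw [mul_smul, prod_smul_empty, fstIdx_of_smul conj_ne_one hw]
    have hk : k ≠ i := by simpa [w] using hw
    have fstIdx_right : ((w.prod * of c) • (Word.empty : Word M)).fstIdx = some k := by
      rw [mul_smul]
      exact (fstIdx_prod_smul_of_smul_empty_eq_some_iff hc hk w).2 (Word.fstIdx_cons m v hv hm)
    rw [conj_mul, fstIdx_right] at fstIdx_left
    exact hk (Option.some.inj fstIdx_left)

end CoprodI

section Coprod

variable {C D : Type*} [Group C] [Group D]

/-- The embedding of `C ∗ D` into an indexed free product. Both factors of the target are `C × D`
rather than `C` and `D`, so that the indexed family is constant and `C` and `D` may live in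
different universes. -/
def coprodToCoprodI : Coprod C D →* CoprodI (fun _ : Bool ↦ C × D) :=
  Coprod.lift ((CoprodI.of (i := false)).comp (MonoidHom.inl C D))
    ((CoprodI.of (i := true)).comp (MonoidHom.inr C D))

/-- The retraction of `coprodToCoprodI` that projects each factor `C × D` to `C` or to `D`. -/
def coprodIToCoprod : CoprodI (fun _ : Bool ↦ C × D) →* Coprod C D :=
  CoprodI.lift fun b ↦
    bif b then Coprod.inr.comp (MonoidHom.snd C D) else Coprod.inl.comp (MonoidHom.fst C D)

theorem coprodIToCoprod_coprodToCoprodI (g : Coprod C D) :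
    coprodIToCoprod (coprodToCoprodI g) = g := by
  have comp_eq_id : coprodIToCoprod.comp coprodToCoprodI = MonoidHom.id (Coprod C D) := by
    ext x <;> simp [coprodIToCoprod, coprodToCoprodI]
  exact DFunLike.congr_fun comp_eq_id g

theorem centralizer_inl_le_range_inl {c : C} (hc : c ≠ 1) :
    Subgroup.centralizer {(Coprod.inl c : Coprod C D)} ≤ (Coprod.inl : C →* Coprod C D).range := by
  intro g hg
  have image_mem : coprodToCoprodI g ∈
      Subgroup.centralizer {CoprodI.of (M := fun _ : Bool ↦ C × D) (i := false) (c, 1)} := by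
    rw [Subgroup.mem_centralizer_singleton_iff] at hg ⊢
    simpa [coprodToCoprodI] using congrArg coprodToCoprodI hg
  obtain ⟨x, hx⟩ := centralizer_of_le_range_of (by simpa [Prod.ext_iff] using hc) image_mem
  refine ⟨x.1, ?_⟩
  rw [← coprodIToCoprod_coprodToCoprodI g, ← hx]
  simp [coprodIToCoprod]

end Coprod

/-- A nontrivial group that is not generated by two nontrivial subgroups commuting with each other.
Equivalently, it is nontrivial, centerless and not a direct product of two nontrivial groups. -/
class IsCentrallyIndecomposable (G : Type*) [Group G] : Prop extends Nontrivial G where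
  eq_bot_or_eq_bot : ∀ {A B : Subgroup G}, A ≤ Subgroup.centralizer B → A ⊔ B = ⊤ →
    A = ⊥ ∨ B = ⊥

section IsCentrallyIndecomposable

variable {G : Type*} [Group G]

theorem eq_bot_of_centralizer_le {H A B : Subgroup G} (H_ne_top : H ≠ ⊤)
    (centralizer_le : ∀ h ∈ H, h ≠ 1 → Subgroup.centralizer {h} ≤ H)
    (hAB : A ≤ Subgroup.centralizer B) (sup_eq_top : A ⊔ B = ⊤)
    {a : G} (ha : a ∈ A) (haH : a ∈ H) (a_ne_one : a ≠ 1) : B = ⊥ := by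
  have B_le : B ≤ H :=
    (Subgroup.le_centralizer_iff.1 hAB).trans <|
      (Subgroup.centralizer_le (Set.singleton_subset_iff.2 ha)).trans
        (centralizer_le a haH a_ne_one)
  refine B.bot_or_exists_ne_one.resolve_right ?_
  rintro ⟨b, hb, b_ne_one⟩
  have A_le : A ≤ H :=
    hAB.trans <| (Subgroup.centralizer_le (Set.singleton_subset_iff.2 hb)).trans
      (centralizer_le b (B_le hb) b_ne_one)
  exact H_ne_top (top_le_iff.1 (sup_eq_top ▸ sup_le A_le B_le))

theorem isCentrallyIndecomposable_of_centralizer_le {H : Subgroup G} (H_ne_bot : H ≠ ⊥)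
    (H_ne_top : H ≠ ⊤) (centralizer_le : ∀ h ∈ H, h ≠ 1 → Subgroup.centralizer {h} ≤ H) :
    IsCentrallyIndecomposable G := by
  obtain ⟨c, hc, c_ne_one⟩ := H.bot_or_exists_ne_one.resolve_left H_ne_bot
  refine { exists_pair_ne := ⟨c, 1, c_ne_one⟩, eq_bot_or_eq_bot := fun {A B} hAB sup_eq_top ↦ ?_ }
  have hBA : B ≤ Subgroup.centralizer A := Subgroup.le_centralizer_iff.1 hAB
  obtain ⟨a, ha, b, hb, rfl⟩ : ∃ a ∈ A, ∃ b ∈ B, a * b = c := by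
    have A_le_normalizer : A ≤ Subgroup.normalizer B :=
      hAB.trans (Subgroup.centralizer_le_normalizer _)
    have c_mem_sup : c ∈ (↑(A ⊔ B) : Set G) := sup_eq_top ▸ Subgroup.mem_top c
    rwa [Subgroup.coe_mul_of_left_le_normalizer_right A B A_le_normalizer, Set.mem_mul] at c_mem_sup
  have hab : b * a = a * b := hAB ha b hb
  have haH : a ∈ H := centralizer_le _ hc c_ne_one <| by
    rw [Subgroup.mem_centralizer_singleton_iff, mul_assoc, hab]
  obtain rfl | a_ne_one := eq_or_ne a 1
  · rw [one_mul] at hc c_ne_one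
    exact .inl (eq_bot_of_centralizer_le H_ne_top centralizer_le hBA (sup_comm A B ▸ sup_eq_top)
      hb hc c_ne_one)
  · exact .inr (eq_bot_of_centralizer_le H_ne_top centralizer_le hAB sup_eq_top ha haH a_ne_one)

end IsCentrallyIndecomposable

instance isCentrallyIndecomposable_coprod {C D : Type*} [Group C] [Group D] [Nontrivial C]
    [Nontrivial D] : IsCentrallyIndecomposable (Coprod C D) := by
  refine isCentrallyIndecomposable_of_centralizer_le (H := (Coprod.inl : C →* Coprod C D).range)
    ?_ ?_ ?_
  · obtain ⟨c, hc⟩ := exists_ne (1 : C)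
    rw [ne_eq, MonoidHom.range_eq_bot_iff]
    exact fun inl_eq_one ↦ hc (Coprod.inl_injective (N := D) (by simp [inl_eq_one]))
  · obtain ⟨d, hd⟩ := exists_ne (1 : D)
    intro range_eq_top
    obtain ⟨c, hc⟩ := MonoidHom.range_eq_top.1 range_eq_top (Coprod.inr d)
    exact hd (by simpa using congrArg Coprod.snd hc.symm)
  · rintro _ ⟨c, rfl⟩ inl_ne_one
    exact centralizer_inl_le_range_inl (ne_of_apply_ne Coprod.inl (by simpa using inl_ne_one))

section Pi

variable {ι κ : Type*} {S : ι → Type*} {T : κ → Type*} [∀ i, Group (S i)] [∀ j, Group (T j)]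

theorem range_mulSingle_le_centralizer_ker_eval [DecidableEq ι] (i : ι) :
    (MonoidHom.mulSingle S i).range ≤ Subgroup.centralizer (Pi.evalMonoidHom S i).ker := by
  rintro _ ⟨s, rfl⟩ x (hx : x i = 1)
  ext k
  obtain rfl | hk := eq_or_ne k i <;> simp [*]

theorem range_mulSingle_sup_ker_eval [DecidableEq ι] (i : ι) :
    (MonoidHom.mulSingle S i).range ⊔ (Pi.evalMonoidHom S i).ker = ⊤ := by
  refine eq_top_iff.2 fun x _ ↦ ?_
  rw [← mul_inv_cancel_left (Pi.mulSingle i (x i)) x]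
  exact Subgroup.mul_mem_sup ⟨x i, rfl⟩ (by simp [MonoidHom.mem_ker])

theorem map_mulSingle_eq_one_or_dependsOn [DecidableEq ι] {G : Type*} [Group G]
    [IsCentrallyIndecomposable G] {f : (∀ i, S i) →* G} (hf : Function.Surjective f) (i : ι) :
    (∀ s, f (Pi.mulSingle i s) = 1) ∨ DependsOn f {i} := by
  let A : Subgroup G := (MonoidHom.mulSingle S i).range.map f
  let B : Subgroup G := (Pi.evalMonoidHom S i).ker.map f
  have hAB : A ≤ Subgroup.centralizer B :=
    (Subgroup.map_mono (range_mulSingle_le_centralizer_ker_eval i)).trans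
      (Subgroup.map_centralizer_le_centralizer_image _ f)
  have sup_eq_top : A ⊔ B = ⊤ := by
    rw [← Subgroup.map_sup, range_mulSingle_sup_ker_eval, Subgroup.map_top_of_surjective f hf]
  rcases IsCentrallyIndecomposable.eq_bot_or_eq_bot hAB sup_eq_top with A_eq_bot | B_eq_bot
  · left
    exact fun s ↦ (Subgroup.map_eq_bot_iff _).1 A_eq_bot (Set.mem_range_self s)
  · right
    intro x y hxy
    have mem_ker : x / y ∈ f.ker :=
      (Subgroup.map_eq_bot_iff _).1 B_eq_bot (by simpa [MonoidHom.mem_ker, div_eq_one] using hxy)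
    exact div_eq_one.1 (by simpa [MonoidHom.mem_ker] using mem_ker)

theorem exists_dependsOn_singleton [∀ j, IsCentrallyIndecomposable (T j)]
    (ψ : (∀ i, S i) ≃* (∀ j, T j)) (i : ι) [Nontrivial (S i)] :
    ∃ j, DependsOn (fun x ↦ ψ x j) {i} := by
  classical
  by_contra! not_dependsOn
  obtain ⟨s, hs⟩ := exists_ne (1 : S i)
  have map_eq_one : ψ (Pi.mulSingle i s) = 1 := by
    ext j
    have surj : Function.Surjective ((Pi.evalMonoidHom T j).comp ψ.toMonoidHom) :=
      (Function.surjective_eval j).comp ψ.surjective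
    exact (map_mulSingle_eq_one_or_dependsOn surj i).resolve_right (not_dependsOn j) s
  exact hs (by simpa using map_eq_one)

theorem map_apply_eq_one_of_dependsOn {ψ : (∀ i, S i) ≃* (∀ j, T j)} {i : ι} {j : κ}
    (hψ : DependsOn (fun x ↦ ψ x j) {i}) {x : ∀ i, S i} (hx : x i = 1) : ψ x j = 1 := by
  simpa using hψ (x := x) (y := 1) (by simpa using hx)

theorem eq_of_dependsOn_of_dependsOn_symm {ψ : (∀ i, S i) ≃* (∀ j, T j)} {i : ι} {j k : κ}
    [Nontrivial (T k)] (hψ : DependsOn (fun x ↦ ψ x k) {i})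
    (hψ_symm : DependsOn (fun y ↦ ψ.symm y i) {j}) : k = j := by
  classical
  by_contra hkj
  obtain ⟨t, ht⟩ := exists_ne (1 : T k)
  have symm_eq_one : ψ.symm (Pi.mulSingle k t) i = 1 :=
    map_apply_eq_one_of_dependsOn hψ_symm (Pi.mulSingle_eq_of_ne' hkj t)
  exact ht (by simpa using map_apply_eq_one_of_dependsOn hψ symm_eq_one)

theorem exists_equiv_dependsOn [∀ i, IsCentrallyIndecomposable (S i)]
    [∀ j, IsCentrallyIndecomposable (T j)] (ψ : (∀ i, S i) ≃* (∀ j, T j)) :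
    ∃ σ : κ ≃ ι, ∀ j,
      DependsOn (fun x ↦ ψ x j) {σ j} ∧ DependsOn (fun y ↦ ψ.symm y (σ j)) {j} := by
  choose σ hσ using fun j ↦ exists_dependsOn_singleton ψ.symm j
  choose τ hτ using fun i ↦ exists_dependsOn_singleton ψ i
  have left_inv (j) : τ (σ j) = j := eq_of_dependsOn_of_dependsOn_symm (hτ (σ j)) (hσ j)
  have right_inv (i) : σ (τ i) = i :=
    eq_of_dependsOn_of_dependsOn_symm (ψ := ψ.symm) (hσ (τ i)) (hτ i)
  have dependsOn_σ (j) : DependsOn (fun x ↦ ψ x j) {σ j} := by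
    have dependsOn_τσ := hτ (σ j)
    rwa [left_inv] at dependsOn_τσ
  exact ⟨⟨σ, τ, left_inv, right_inv⟩, fun j ↦ ⟨dependsOn_σ j, hσ j⟩⟩

theorem symm_mulSingle_map_mulSingle [DecidableEq ι] [DecidableEq κ]
    {ψ : (∀ i, S i) ≃* (∀ j, T j)} {i : ι} {j : κ} (hψ_symm : DependsOn (fun y ↦ ψ.symm y i) {j})
    (s : S i) : ψ.symm (Pi.mulSingle j (ψ (Pi.mulSingle i s) j)) i = s := by
  simpa using hψ_symm (x := Pi.mulSingle j (ψ (Pi.mulSingle i s) j)) (y := ψ (Pi.mulSingle i s))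
    (by simp)

theorem bijective_map_mulSingle_apply [DecidableEq ι] {ψ : (∀ i, S i) ≃* (∀ j, T j)} {i : ι}
    {j : κ} (hψ : DependsOn (fun x ↦ ψ x j) {i}) (hψ_symm : DependsOn (fun y ↦ ψ.symm y i) {j}) :
    Function.Bijective fun s ↦ ψ (Pi.mulSingle i s) j := by
  classical
  exact Function.bijective_iff_has_inverse.2 ⟨fun t ↦ ψ.symm (Pi.mulSingle j t) i,
    symm_mulSingle_map_mulSingle hψ_symm, symm_mulSingle_map_mulSingle (ψ := ψ.symm) hψ⟩

theorem stmt_18_general [DecidableEq ι] [∀ i, IsCentrallyIndecomposable (S i)]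
    [∀ j, IsCentrallyIndecomposable (T j)] (ψ : (∀ i, S i) ≃* (∀ j, T j)) :
    ∃ σ : κ ≃ ι, ∀ j : κ,
      (Function.Bijective fun s : S (σ j) ↦ ψ (Pi.mulSingle (σ j) s) j) ∧
      ∀ i : ι, i ≠ σ j → ∀ s : S i, ψ (Pi.mulSingle i s) j = 1 := by
  obtain ⟨σ, hσ⟩ := exists_equiv_dependsOn ψ
  exact ⟨σ, fun j ↦ ⟨bijective_map_mulSingle_apply (hσ j).1 (hσ j).2, fun i hi s ↦
    map_apply_eq_one_of_dependsOn (hσ j).1 (Pi.mulSingle_eq_of_ne' hi s)⟩⟩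

end Pi

theorem stmt_18 (C D : Type*) [Group C] [Group D] [Nontrivial C] [Nontrivial D]
    (n : ℕ) (ψ : (Fin n → Coprod C D) ≃* (Fin n → Coprod C D)) :
    ∃ σ : Equiv.Perm (Fin n), ∀ j : Fin n,
      (Function.Bijective fun s : Coprod C D => ψ (Pi.mulSingle (σ j) s) j) ∧
      ∀ i : Fin n, i ≠ σ j → ∀ s : Coprod C D, ψ (Pi.mulSingle i s) j = 1 :=
  stmt_18_general ψ
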